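/- Let λ, μ ∈ A be positive invertible elements with ελε = λ^{-1} and εμε = μ^{-1}, where ε = 2p − 1. Then ‖(1−p)λμ^{-1}p‖ = ‖(1−p)μλ^{-1}p‖. (The function ρ defining the pseudo-chordal metric on the disc D⁺ is symmetric.) -/

import Mathlib

/-!
Put `ε = 2p − 1` and `g = λμ⁻¹`. Both `λ` and `μ` preserve the form `(x, y) ↦ x* ε y`, hence so
does `g`. The `p`-corner of `g* ε g = ε` reads `a* a = p + c* c`, where `a = pgp` and
`c = (1 − p)gp`, so that `‖1 − p + a‖² = ‖1 + c* c‖ = 1 + ‖c‖²`. Since `g⁻¹ = ε g* ε`, the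
corner `pg⁻¹p` is `a*`; passing from `g` to `g⁻¹` thus leaves `‖1 − p + a‖`, and therefore
`‖c‖`, unchanged.
-/

section EpsUnitary

variable {M : Type*} [Monoid M] [StarMul M] {e : M} {g : Mˣ}

/-- The group of `e`-unitaries: the units `g` of a star monoid with `g* e g = e`. For a self-adjoint
symmetry `e` these are the automorphisms of the indefinite form `(x, y) ↦ x* e y`. -/
def epsUnitary (e : M) : Subgroup Mˣ where
  carrier := {g | star (g : M) * e * g = e}
  one_mem' := by simp
  mul_mem' {g h} hg hh := by
    calc star (↑(g * h) : M) * e * ↑(g * h)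
        = star (h : M) * (star (g : M) * e * g) * h := by
          simp only [Units.val_mul, star_mul, mul_assoc]
      _ = e := by rw [hg, hh]
  inv_mem' {g} hg := by
    calc star (↑g⁻¹ : M) * e * ↑g⁻¹
        = star (↑g⁻¹ : M) * (star (g : M) * e * g) * ↑g⁻¹ := by rw [hg]
      _ = star (↑(g * g⁻¹) : M) * e * ↑(g * g⁻¹) := by
          simp only [Units.val_mul, star_mul, mul_assoc]
      _ = e := by simp

theorem mem_epsUnitary_iff : g ∈ epsUnitary e ↔ star (g : M) * e * g = e :=
  Iff.rfl

theorem star_mul_eq_mul_inv_of_mem_epsUnitary (hg : g ∈ epsUnitary e) :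
    star (g : M) * e = e * ↑g⁻¹ :=
  (Units.eq_mul_inv_iff_mul_eq g).2 hg

theorem mem_epsUnitary_of_isSelfAdjoint (he : e * e = 1) (hg : IsSelfAdjoint (g : M))
    (h_conj : e * g * e = ↑g⁻¹) : g ∈ epsUnitary e := by
  rw [mem_epsUnitary_iff, hg.star_eq]
  calc (g : M) * e * g = g * (e * g * e) * e := by simp only [mul_assoc, he, mul_one]
    _ = e := by rw [h_conj, Units.mul_inv, one_mul]

end EpsUnitary

section Idempotent

variable {R : Type*} [Ring R] {p : R}

theorem mul_two_mul_sub_one_of_isIdempotentElem (hp : IsIdempotentElem p) :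
    p * (2 * p - 1) = p := by
  simp only [two_mul, mul_sub, mul_add, hp.eq, mul_one, add_sub_cancel_right]

theorem two_mul_sub_one_mul_of_isIdempotentElem (hp : IsIdempotentElem p) :
    (2 * p - 1) * p = p := by
  simp only [two_mul, sub_mul, add_mul, hp.eq, one_mul, add_sub_cancel_right]

theorem two_mul_sub_one_mul_self_of_isIdempotentElem (hp : IsIdempotentElem p) :
    (2 * p - 1) * (2 * p - 1) = 1 := by
  rw [sub_mul, mul_assoc, mul_two_mul_sub_one_of_isIdempotentElem hp, one_mul, sub_sub_cancel]

theorem corner_mul_corner_of_mul_two_mul_sub_one_mul (hp : IsIdempotentElem p) {h g : R}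
    (hg : h * (2 * p - 1) * g = 2 * p - 1) :
    (p * h * p) * (p * g * p) = p + (p * h * (1 - p)) * ((1 - p) * g * p) := by
  calc (p * h * p) * (p * g * p) = p * h * (p * p) * g * p := by noncomm_ring
    _ = p * (h * (2 * p - 1) * g) * p + p * h * (1 - p) * g * p := by rw [hp.eq]; noncomm_ring
    _ = p + p * h * ((1 - p) * (1 - p)) * g * p := by
      rw [hg, mul_two_mul_sub_one_of_isIdempotentElem hp, hp.eq, hp.one_sub.eq]
    _ = p + (p * h * (1 - p)) * ((1 - p) * g * p) := by simp only [mul_assoc]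

theorem one_sub_add_corner_mul_one_sub_add_corner (hp : IsIdempotentElem p) (h g : R) :
    (1 - p + p * h * p) * (1 - p + p * g * p) = 1 - p + (p * h * p) * (p * g * p) := by
  calc (1 - p + p * h * p) * (1 - p + p * g * p)
      = (1 - p) * (1 - p) + ((1 - p) * p) * (g * p) + (p * h) * (p * (1 - p))
          + (p * h * p) * (p * g * p) := by noncomm_ring
    _ = 1 - p + (p * h * p) * (p * g * p) := by
      simp only [hp.one_sub.eq, hp.one_sub_mul_self, hp.mul_one_sub_self, zero_mul, mul_zero,
        add_zero]

end Idempotent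

section StarProjection

variable {R : Type*} [Ring R] [StarRing R] {p : R}

theorem star_mul_self_one_sub_add_corner (hp : IsStarProjection p) {g : R}
    (hg : star g * (2 * p - 1) * g = 2 * p - 1) :
    star (1 - p + p * g * p) * (1 - p + p * g * p)
      = 1 + star ((1 - p) * g * p) * ((1 - p) * g * p) := by
  simp only [star_add, star_sub, star_mul, star_one, hp.isSelfAdjoint.star_eq, ← mul_assoc p]
  rw [one_sub_add_corner_mul_one_sub_add_corner hp.isIdempotentElem,
    corner_mul_corner_of_mul_two_mul_sub_one_mul hp.isIdempotentElem hg, ← add_assoc,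
    sub_add_cancel]

theorem corner_inv_eq_star_corner (hp : IsStarProjection p) {g : Rˣ}
    (hg : g ∈ epsUnitary (2 * p - 1)) : p * ↑g⁻¹ * p = star (p * g * p) := by
  calc p * ↑g⁻¹ * p = p * ((2 * p - 1) * ↑g⁻¹) * p := by
        rw [← mul_assoc, mul_two_mul_sub_one_of_isIdempotentElem hp.isIdempotentElem]
    _ = p * star (g : R) * ((2 * p - 1) * p) := by
        rw [← star_mul_eq_mul_inv_of_mem_epsUnitary hg]; simp only [mul_assoc]
    _ = star (p * g * p) := by
        simp only [two_mul_sub_one_mul_of_isIdempotentElem hp.isIdempotentElem, star_mul,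
          hp.isSelfAdjoint.star_eq, mul_assoc]

end StarProjection

section Norm

variable {A : Type*} [CStarAlgebra A]

theorem norm_one_add_of_nonneg [PartialOrder A] [StarOrderedRing A] [Nontrivial A] {a : A}
    (ha : 0 ≤ a) : ‖1 + a‖ = 1 + ‖a‖ := by
  refine le_antisymm ((norm_add_le 1 a).trans_eq (by rw [norm_one])) ?_
  have h_mem : 1 + ‖a‖ ∈ spectrum ℝ (1 + a) := by
    simpa only [map_one, add_comm] using
      (spectrum.add_mem_add_iff (s := 1)).2 (CStarAlgebra.norm_mem_spectrum_of_nonneg ha)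
  exact (Real.le_norm_self _).trans (spectrum.norm_le_norm_of_mem h_mem)

theorem norm_one_add_star_mul_self [Nontrivial A] (a : A) : ‖1 + star a * a‖ = 1 + ‖a‖ ^ 2 := by
  let _ := CStarAlgebra.spectralOrder A
  let _ := CStarAlgebra.spectralOrderedRing A
  rw [norm_one_add_of_nonneg (star_mul_self_nonneg a), CStarRing.norm_star_mul_self, sq]

variable {p : A}

theorem norm_one_sub_add_corner_sq [Nontrivial A] (hp : IsStarProjection p) {g : A}
    (hg : star g * (2 * p - 1) * g = 2 * p - 1) :
    ‖1 - p + p * g * p‖ ^ 2 = 1 + ‖(1 - p) * g * p‖ ^ 2 := by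
  rw [sq, ← CStarRing.norm_star_mul_self, star_mul_self_one_sub_add_corner hp hg,
    norm_one_add_star_mul_self]

theorem norm_one_sub_mul_inv_mul_of_mem_epsUnitary (hp : IsStarProjection p) {g : Aˣ}
    (hg : g ∈ epsUnitary (2 * p - 1)) : ‖(1 - p) * ↑g⁻¹ * p‖ = ‖(1 - p) * g * p‖ := by
  nontriviality A
  have h_star : 1 - p + p * ↑g⁻¹ * p = star (1 - p + p * g * p) := by
    rw [star_add, hp.one_sub.isSelfAdjoint.star_eq, corner_inv_eq_star_corner hp hg]
  have h_sq : 1 + ‖(1 - p) * ↑g⁻¹ * p‖ ^ 2 = 1 + ‖(1 - p) * g * p‖ ^ 2 := by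
    rw [← norm_one_sub_add_corner_sq hp (inv_mem hg), h_star, norm_star,
      norm_one_sub_add_corner_sq hp hg]
  exact (sq_eq_sq₀ (norm_nonneg _) (norm_nonneg _)).1 (add_left_cancel h_sq)

theorem stmt_17_general (hp : IsStarProjection p) {u v : Aˣ} (hu : u ∈ epsUnitary (2 * p - 1))
    (hv : v ∈ epsUnitary (2 * p - 1)) :
    ‖(1 - p) * u * ↑v⁻¹ * p‖ = ‖(1 - p) * v * ↑u⁻¹ * p‖ := by
  simpa only [mul_inv_rev, inv_inv, Units.val_mul, ← mul_assoc] using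
    (norm_one_sub_mul_inv_mul_of_mem_epsUnitary hp (mul_mem hu (inv_mem hv))).symm

end Norm

/-- the function `ρ` defining the pseudo-chordal metric is symmetric:
`‖(1−p)λμ⁻¹p‖ = ‖(1−p)μλ⁻¹p‖` for positive `ε`-unitaries `λ, μ`. -/
theorem stmt_17 {A : Type*} [CStarAlgebra A] [PartialOrder A] [StarOrderedRing A]
    (p : A) (hp_star : p = star p) (hp_idem : p * p = p)
    (lam mu : A) (hl_pos : 0 ≤ lam) (hl_u : IsUnit lam)
    (hm_pos : 0 ≤ mu) (hm_u : IsUnit mu)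
    (hl_eps : (2 * p - 1) * lam * (2 * p - 1) = Ring.inverse lam)
    (hm_eps : (2 * p - 1) * mu * (2 * p - 1) = Ring.inverse mu) :
    ‖(1 - p) * lam * Ring.inverse mu * p‖ = ‖(1 - p) * mu * Ring.inverse lam * p‖ := by
  lift lam to Aˣ using hl_u
  lift mu to Aˣ using hm_u
  simp only [Ring.inverse_unit] at hl_eps hm_eps ⊢
  have h_symm := two_mul_sub_one_mul_self_of_isIdempotentElem hp_idem
  exact stmt_17_general ⟨hp_idem, hp_star.symm⟩
    (mem_epsUnitary_of_isSelfAdjoint h_symm (.of_nonneg hl_pos) hl_eps)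
    (mem_epsUnitary_of_isSelfAdjoint h_symm (.of_nonneg hm_pos) hm_eps)
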